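/- Let K be a class of algebras and φ(x1,…,xn,y) an existential positive formula that is functional in K. Then φ is functional in the quasivariety Q(K) generated by K, and hence φ defines an implicit operation of Q(K). -/

import Mathlib

namespace Impl

open FirstOrder Language

universe u v

/-- A bundled algebra (first-order structure) for the language `L`. -/
structure Alg (L : FirstOrder.Language.{u, u}) : Type (u + 1) where
  carrier : Type u
  [str : L.Structure carrier]

attribute [instance] Alg.str

variable {L : FirstOrder.Language.{u, u}}

/-- The direct product of a family of algebras. -/
def Alg.pi {ι : Type u} (A : ι → Alg L) : Alg L where
  carrier := ∀ i, (A i).carrier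
  str :=
    { funMap := fun {k} f v i => Structure.funMap f fun j => v j i
      RelMap := fun {k} r v => ∀ i, Structure.RelMap r fun j => v j i }

/-- The binary direct product of two algebras. -/
def Alg.prod (A B : Alg L) : Alg L where
  carrier := A.carrier × B.carrier
  str :=
    { funMap := fun {k} f v =>
        (Structure.funMap f fun j => (v j).1, Structure.funMap f fun j => (v j).2)
      RelMap := fun {k} r v =>
        Structure.RelMap r (fun j => (v j).1) ∧ Structure.RelMap r fun j => (v j).2 }

/-- The ultraproduct of a family of algebras with respect to an ultrafilter. -/
def Alg.uprod {ι : Type u} (F : Ultrafilter ι) (A : ι → Alg L) : Alg L where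
  carrier := Filter.Product (F : Filter ι) fun i => (A i).carrier
  str := inferInstance

/-- Closure under isomorphic copies. -/
def ClosedUnderIso (K : Set (Alg L)) : Prop :=
  ∀ A B : Alg L, A ∈ K → Nonempty (A.carrier ≃[L] B.carrier) → B ∈ K

/-- Closure under subalgebras (up to the identification of a subalgebra with an embedding). -/
def ClosedUnderSub (K : Set (Alg L)) : Prop :=
  ∀ A B : Alg L, B ∈ K → Nonempty (A.carrier ↪[L] B.carrier) → A ∈ K

/-- Closure under direct products. -/
def ClosedUnderProd (K : Set (Alg L)) : Prop :=
  ∀ (ι : Type u) (A : ι → Alg L), (∀ i, A i ∈ K) → Alg.pi A ∈ K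

/-- Closure under finite direct products. -/
def ClosedUnderFinProd (K : Set (Alg L)) : Prop :=
  ∀ (ι : Type u), Finite ι → ∀ A : ι → Alg L, (∀ i, A i ∈ K) → Alg.pi A ∈ K

/-- Closure under homomorphic images. -/
def ClosedUnderHomImg (K : Set (Alg L)) : Prop :=
  ∀ A B : Alg L, A ∈ K → ∀ h : A.carrier →[L] B.carrier, Function.Surjective h → B ∈ K

/-- Closure under ultraproducts. -/
def ClosedUnderUprod (K : Set (Alg L)) : Prop :=
  ∀ (ι : Type u) (F : Ultrafilter ι) (A : ι → Alg L), (∀ i, A i ∈ K) → Alg.uprod F A ∈ K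

/-- A universal class: a class closed under isomorphic copies, subalgebras and ultraproducts. -/
def IsUniversalClass (K : Set (Alg L)) : Prop :=
  ClosedUnderIso K ∧ ClosedUnderSub K ∧ ClosedUnderUprod K

/-- A quasivariety: a class closed under isomorphic copies, subalgebras, direct products and
ultraproducts. -/
def IsQuasivariety (K : Set (Alg L)) : Prop :=
  ClosedUnderIso K ∧ ClosedUnderSub K ∧ ClosedUnderProd K ∧ ClosedUnderUprod K

/-- A variety: a class closed under homomorphic images, subalgebras and direct products. -/
def IsVariety (K : Set (Alg L)) : Prop :=
  ClosedUnderHomImg K ∧ ClosedUnderSub K ∧ ClosedUnderProd K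

/-- The least quasivariety containing `K`. -/
def QGen (K : Set (Alg L)) : Set (Alg L) :=
  ⋂₀ { M : Set (Alg L) | IsQuasivariety M ∧ K ⊆ M }

/-- The least variety containing `K`. -/
def VGen (K : Set (Alg L)) : Set (Alg L) :=
  ⋂₀ { M : Set (Alg L) | IsVariety M ∧ K ⊆ M }

/-- An elementary class: the class of all models of some first-order theory. -/
def IsElementary (K : Set (Alg L)) : Prop :=
  ∃ T : L.Theory, ∀ A : Alg L, A ∈ K ↔ ∀ φ ∈ T, A.carrier ⊨ φ

/-- Finite conjunctions of equations (with `⊤` as the empty conjunction). -/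
inductive IsConjEq {α : Type v} : ∀ {k : ℕ}, L.BoundedFormula α k → Prop
  | top {k} : IsConjEq (⊤ : L.BoundedFormula α k)
  | equal {k} (t₁ t₂ : L.Term (α ⊕ Fin k)) : IsConjEq (BoundedFormula.equal t₁ t₂)
  | inf {k} {φ ψ : L.BoundedFormula α k} : IsConjEq φ → IsConjEq ψ → IsConjEq (φ ⊓ ψ)

/-- Positive quantifier-free formulas: built from equations, `⊤` and `⊥` using `⊓` and `⊔`. -/
inductive IsPosQF {α : Type v} : ∀ {k : ℕ}, L.BoundedFormula α k → Prop
  | falsum {k} : IsPosQF (⊥ : L.BoundedFormula α k)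
  | top {k} : IsPosQF (⊤ : L.BoundedFormula α k)
  | equal {k} (t₁ t₂ : L.Term (α ⊕ Fin k)) : IsPosQF (BoundedFormula.equal t₁ t₂)
  | inf {k} {φ ψ : L.BoundedFormula α k} : IsPosQF φ → IsPosQF ψ → IsPosQF (φ ⊓ ψ)
  | sup {k} {φ ψ : L.BoundedFormula α k} : IsPosQF φ → IsPosQF ψ → IsPosQF (φ ⊔ ψ)

/-- Primitive positive (pp) formulas: existentially quantified finite conjunctions of
equations. -/
inductive IsPP {α : Type v} : ∀ {k : ℕ}, L.BoundedFormula α k → Prop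
  | of_conjEq {k} {φ : L.BoundedFormula α k} : IsConjEq φ → IsPP φ
  | ex {k} {φ : L.BoundedFormula α (k + 1)} : IsPP φ → IsPP φ.ex

/-- Existential positive formulas: existentially quantified positive quantifier-free
formulas. -/
inductive IsExistPos {α : Type v} : ∀ {k : ℕ}, L.BoundedFormula α k → Prop
  | of_posQF {k} {φ : L.BoundedFormula α k} : IsPosQF φ → IsExistPos φ
  | ex {k} {φ : L.BoundedFormula α (k + 1)} : IsExistPos φ → IsExistPos φ.ex

/-- Two formulas are equivalent in a class of algebras. -/
def EquivOn (K : Set (Alg L)) {α : Type v} (φ ψ : L.Formula α) : Prop :=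
  ∀ A : Alg L, A ∈ K → ∀ x : α → A.carrier, φ.Realize x ↔ ψ.Realize x

/-- A formula is preserved by homomorphisms in `K`. -/
def PreservedByHomsOn (K : Set (Alg L)) {α : Type v} (φ : L.Formula α) : Prop :=
  ∀ A B : Alg L, A ∈ K → B ∈ K → ∀ (h : A.carrier →[L] B.carrier) (x : α → A.carrier),
    φ.Realize x → φ.Realize fun a => h (x a)

/-- A formula is preserved by direct products in `K`. -/
def PreservedByProdsOn (K : Set (Alg L)) {α : Type v} (φ : L.Formula α) : Prop :=
  ∀ (ι : Type u) (A : ι → Alg L), (∀ i, A i ∈ K) → ∀ x : α → (Alg.pi A).carrier,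
    (∀ i, φ.Realize fun a => x a i) → φ.Realize x

/-- An `n`-ary partial function on a class of algebras `K`: a family assigning to each member of
`K` an `n`-ary partial function on its carrier. -/
def PartialFunOn (K : Set (Alg L)) (n : ℕ) :=
  ∀ (A : Alg L), A ∈ K → ((Fin n → A.carrier) →. A.carrier)

/-- A partial function on `K` is defined by the formula `φ(x₁, …, xₙ, y)` (the last variable
being the output) when its graph on each member of `K` is the solution set of `φ`. -/
def DefinedBy {K : Set (Alg L)} {n : ℕ} (f : PartialFunOn K n)
    (φ : L.Formula (Fin (n + 1))) : Prop :=
  ∀ (A : Alg L) (hA : A ∈ K) (x : Fin n → A.carrier) (b : A.carrier),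
    b ∈ f A hA x ↔ φ.Realize (Fin.snoc x b)

/-- The formula `φ(x₁, …, xₙ, y)` is functional in `K`: for all inputs there is at most one
output satisfying it. -/
def FunctionalIn (K : Set (Alg L)) {n : ℕ} (φ : L.Formula (Fin (n + 1))) : Prop :=
  ∀ A : Alg L, A ∈ K → ∀ (x : Fin n → A.carrier) (b₁ b₂ : A.carrier),
    φ.Realize (Fin.snoc x b₁) → φ.Realize (Fin.snoc x b₂) → b₁ = b₂

/-- A partial function on `K` is an operation of `K` when it is preserved by all homomorphisms
between members of `K`. -/
def IsOperationOn {K : Set (Alg L)} {n : ℕ} (f : PartialFunOn K n) : Prop :=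
  ∀ (A B : Alg L) (hA : A ∈ K) (hB : B ∈ K) (h : A.carrier →[L] B.carrier)
    (x : Fin n → A.carrier) (b : A.carrier),
    b ∈ f A hA x → h b ∈ f B hB fun i => h (x i)

/-- A partial function on `K` is implicit when it is defined by some formula. -/
def IsImplicit {K : Set (Alg L)} {n : ℕ} (f : PartialFunOn K n) : Prop :=
  ∃ φ : L.Formula (Fin (n + 1)), DefinedBy f φ

/-- An implicit operation of `K`: a partial function that is both implicit and an operation. -/
def IsImplicitOp {K : Set (Alg L)} {n : ℕ} (f : PartialFunOn K n) : Prop :=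
  IsImplicit f ∧ IsOperationOn f

/-- An implicit operation is extendable when every tuple in every member of `K` lies in the
domain of the operation in some extension inside `K`. -/
def Extendable {K : Set (Alg L)} {n : ℕ} (f : PartialFunOn K n) : Prop :=
  ∀ (A : Alg L) (hA : A ∈ K) (x : Fin n → A.carrier),
    ∃ (B : Alg L) (hB : B ∈ K) (e : A.carrier ↪[L] B.carrier),
      (f B hB fun i => e (x i)).Dom

/-- The dominion of a subset `s` of `M` relative to the class `K`. -/
def dominion (K : Set (Alg L)) (M : Type u) [L.Structure M] (s : Set M) : Set M :=
  { b | ∀ C : Alg L, C ∈ K → ∀ g h : M →[L] C.carrier, (∀ a ∈ s, g a = h a) → g b = h b }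

/-- The strong epimorphism surjectivity property. -/
def StrongES (K : Set (Alg L)) : Prop :=
  ∀ (A B : Alg L), A ∈ K → B ∈ K → ∀ (f : A.carrier →[L] B.carrier) (b : B.carrier),
    b ∉ Set.range f →
      ∃ C : Alg L, C ∈ K ∧ ∃ g h : B.carrier →[L] C.carrier,
        (∀ a : A.carrier, g (f a) = h (f a)) ∧ g b ≠ h b

/-- The weak epimorphism surjectivity property: every `K`-epimorphism between finitely
generated members of `K` is surjective. -/
def WeakES (K : Set (Alg L)) : Prop :=
  ∀ (A B : Alg L), A ∈ K → B ∈ K →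
    Structure.FG L A.carrier → Structure.FG L B.carrier →
      ∀ f : A.carrier →[L] B.carrier,
        (∀ C : Alg L, C ∈ K → ∀ g h : B.carrier →[L] C.carrier,
          (∀ a : A.carrier, g (f a) = h (f a)) → g = h) →
        Function.Surjective f

/-- The amalgamation property. -/
def HasAmalgamation (K : Set (Alg L)) : Prop :=
  ∀ (A B C : Alg L), A ∈ K → B ∈ K → C ∈ K →
    ∀ (f : A.carrier ↪[L] B.carrier) (g : A.carrier ↪[L] C.carrier),
      ∃ D : Alg L, D ∈ K ∧ ∃ (f' : B.carrier ↪[L] D.carrier) (g' : C.carrier ↪[L] D.carrier),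
        ∀ a : A.carrier, f' (f a) = g' (g a)

/-- A finitely presented member of `K`: an algebra in `K` with a finite presentation, phrased
through the usual universal property of `T(X)/Cg_K(Y)`. -/
def FinitelyPresentedIn (K : Set (Alg L)) (B : Alg L) : Prop :=
  B ∈ K ∧ ∃ (m : ℕ) (Y : Finset (L.Term (Fin m) × L.Term (Fin m))) (b : Fin m → B.carrier),
    Substructure.closure L (Set.range b) = ⊤ ∧
    (∀ p ∈ Y, p.1.realize b = p.2.realize b) ∧
    ∀ C : Alg L, C ∈ K → ∀ x : Fin m → C.carrier,
      (∀ p ∈ Y, p.1.realize x = p.2.realize x) →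
        ∃ g : B.carrier →[L] C.carrier, ∀ i, g (b i) = x i

/-- Subdirectly irreducible relative to `K`. -/
def IsRSI (K : Set (Alg L)) (A : Alg L) : Prop :=
  A ∈ K ∧ ∀ (ι : Type u) (B : ι → Alg L), (∀ i, B i ∈ K) →
    ∀ h : A.carrier ↪[L] (Alg.pi B).carrier,
      (∀ i, Function.Surjective fun a => h a i) →
        ∃ i, Function.Bijective fun a => h a i

/-- Finitely subdirectly irreducible relative to `K`. -/
def IsRFSI (K : Set (Alg L)) (A : Alg L) : Prop :=
  A ∈ K ∧ ∀ (ι : Type u), Finite ι → ∀ B : ι → Alg L, (∀ i, B i ∈ K) →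
    ∀ h : A.carrier ↪[L] (Alg.pi B).carrier,
      (∀ i, Function.Surjective fun a => h a i) →
        ∃ i, Function.Bijective fun a => h a i

/-- A congruence on an algebra: an equivalence relation compatible with all the operations. -/
def IsCongruenceOn (A : Alg L) (θ : A.carrier → A.carrier → Prop) : Prop :=
  Equivalence θ ∧
    ∀ (k : ℕ) (f : L.Functions k) (x y : Fin k → A.carrier),
      (∀ i, θ (x i) (y i)) → θ (Structure.funMap f x) (Structure.funMap f y)

/-- The quotient of an algebra by (the setoid of) an equivalence relation; when the relation is
a congruence this is the quotient algebra. -/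
noncomputable def Alg.quot (A : Alg L) (θ : A.carrier → A.carrier → Prop) (h : Equivalence θ) :
    Alg L where
  carrier := Quotient (⟨θ, h⟩ : Setoid A.carrier)
  str :=
    { funMap := fun {k} f v => Quotient.mk _ (Structure.funMap f fun i => (v i).out)
      RelMap := fun {k} r v => Structure.RelMap r fun i => (v i).out }

/-- A `K`-congruence of `A`: a congruence whose quotient lies in `K`. -/
def IsRelCong (K : Set (Alg L)) (A : Alg L) (θ : A.carrier → A.carrier → Prop) : Prop :=
  ∃ h : IsCongruenceOn A θ, Alg.quot A θ h.1 ∈ K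

/-- The join of two relations in the lattice of `K`-congruences of `A`. -/
def relCongJoin (K : Set (Alg L)) (A : Alg L)
    (θ φ : A.carrier → A.carrier → Prop) (x y : A.carrier) : Prop :=
  ∀ ρ : A.carrier → A.carrier → Prop, IsRelCong K A ρ →
    (∀ a b, θ a b → ρ a b) → (∀ a b, φ a b → ρ a b) → ρ x y

/-- Relative congruence distributivity: the lattice of `K`-congruences of each member of `K`
is distributive. -/
def RelCongDistributive (K : Set (Alg L)) : Prop :=
  ∀ A : Alg L, A ∈ K → ∀ θ φ ψ : A.carrier → A.carrier → Prop,
    IsRelCong K A θ → IsRelCong K A φ → IsRelCong K A ψ →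
      ∀ x y : A.carrier,
        (θ x y ∧ relCongJoin K A φ ψ x y) ↔
          relCongJoin K A (fun a b => θ a b ∧ φ a b) (fun a b => θ a b ∧ ψ a b) x y

/-- The join of two relations in the lattice of congruences of `A`. -/
def congJoin (A : Alg L) (θ φ : A.carrier → A.carrier → Prop) (x y : A.carrier) : Prop :=
  ∀ ρ : A.carrier → A.carrier → Prop, IsCongruenceOn A ρ →
    (∀ a b, θ a b → ρ a b) → (∀ a b, φ a b → ρ a b) → ρ x y

/-- Congruence permutability for all members of a class. -/
def CongPermutableClass (K : Set (Alg L)) : Prop :=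
  ∀ A : Alg L, A ∈ K → ∀ θ φ : A.carrier → A.carrier → Prop,
    IsCongruenceOn A θ → IsCongruenceOn A φ →
      ∀ x y : A.carrier, (∃ z, θ x z ∧ φ z y) ↔ ∃ z, φ x z ∧ θ z y

/-- Congruence distributivity for all members of a class. -/
def CongDistributiveClass (K : Set (Alg L)) : Prop :=
  ∀ A : Alg L, A ∈ K → ∀ θ φ ψ : A.carrier → A.carrier → Prop,
    IsCongruenceOn A θ → IsCongruenceOn A φ → IsCongruenceOn A ψ →
      ∀ x y : A.carrier,
        (θ x y ∧ congJoin A φ ψ x y) ↔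
          congJoin A (fun a b => θ a b ∧ φ a b) (fun a b => θ a b ∧ ψ a b) x y

/-- The congruence extension property. -/
def HasCEP (K : Set (Alg L)) : Prop :=
  ∀ A B : Alg L, A ∈ K → B ∈ K → ∀ e : A.carrier ↪[L] B.carrier,
    ∀ θ : A.carrier → A.carrier → Prop, IsCongruenceOn A θ →
      ∃ ρ : B.carrier → B.carrier → Prop, IsCongruenceOn B ρ ∧
        ∀ x y : A.carrier, θ x y ↔ ρ (e x) (e y)

/-- The language consisting of one new function symbol `gᵢ` of arity `ar i` for each `i`. -/
def newLang {ι : Type u} (ar : ι → ℕ) : FirstOrder.Language.{u, u} where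
  Functions := fun n => { i : ι // ar i = n }
  Relations := fun _ => PEmpty

/-- The `L`-reduct of an algebra in an expanded language `L.sum N`. -/
def algReduct {N : FirstOrder.Language.{u, u}} (B : Alg (L.sum N)) : Alg L where
  carrier := B.carrier
  str := (LHom.sumInl : L →ᴸ L.sum N).reduct B.carrier

/-- The class `K[L_F]` of expansions of members of `K` on which each operation in the family
`f` is total, interpreting the new symbol `gᵢ` as `f i`. -/
def expClass (K : Set (Alg L)) {ι : Type u} (ar : ι → ℕ)
    (f : ∀ i, PartialFunOn K (ar i)) : Set (Alg (L.sum (newLang ar))) :=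
  { B | ∃ hB : algReduct B ∈ K,
      ∀ (i : ι) (x : Fin (ar i) → B.carrier),
        Structure.funMap (L := L.sum (newLang ar)) (M := B.carrier)
            (Sum.inr ⟨i, rfl⟩ : (L.sum (newLang ar)).Functions (ar i)) x
          ∈ f i (algReduct B) hB x }

/-- Closure under subalgebras (and isomorphic copies) inside a fixed language. -/
def SClosure {L' : FirstOrder.Language.{u, u}} (S : Set (Alg L')) : Set (Alg L') :=
  { A | ∃ B ∈ S, Nonempty (A.carrier ↪[L'] B.carrier) }

/-- Membership in `ext_pp(K)`: an extendable implicit operation defined by a pp formula. -/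
def InExtPP {K : Set (Alg L)} {n : ℕ} (f : PartialFunOn K n) : Prop :=
  IsOperationOn f ∧ (∃ φ : L.Formula (Fin (n + 1)), IsPP φ ∧ DefinedBy f φ) ∧ Extendable f

/-- `M` is the pp expansion of `K` induced by the family `f` of extendable pp-definable
implicit operations, with one new symbol of arity `ar i` for each `i`. -/
def IsPPExpansionVia (K : Set (Alg L)) {ι : Type u} (ar : ι → ℕ)
    (f : ∀ i, PartialFunOn K (ar i)) (M : Set (Alg (L.sum (newLang ar)))) : Prop :=
  (∀ i, 0 < ar i) ∧ (∀ i, InExtPP (f i)) ∧ M = SClosure (expClass K ar f)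

/-- Every implicit operation of `K` is interpolated in `M` by a set of terms of the expanded
language. -/
def InterpolatesByTermsInExp (K : Set (Alg L)) {ι : Type u} {ar : ι → ℕ}
    (M : Set (Alg (L.sum (newLang ar)))) : Prop :=
  ∀ n : ℕ, 0 < n → ∀ g : PartialFunOn K n, IsImplicitOp g →
    ∃ T : Set ((L.sum (newLang ar)).Term (Fin n)),
      ∀ A : Alg (L.sum (newLang ar)), A ∈ M →
        ∀ (hA : algReduct A ∈ K) (x : Fin n → A.carrier) (b : A.carrier),
          b ∈ g (algReduct A) hA x → ∃ t ∈ T, t.realize x = b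

/-- `M` is a Beth companion of `K` (via the given expansion datum). -/
def IsBethCompanionVia (K : Set (Alg L)) {ι : Type u} (ar : ι → ℕ)
    (f : ∀ i, PartialFunOn K (ar i)) (M : Set (Alg (L.sum (newLang ar)))) : Prop :=
  IsPPExpansionVia K ar f M ∧ InterpolatesByTermsInExp K M

/-- A pp expansion is congruence preserving when the `M`-congruences of each member of `M`
coincide with the `K`-congruences of its `L`-reduct. -/
def CongPreserving {N : FirstOrder.Language.{u, u}} (K : Set (Alg L))
    (M : Set (Alg (L.sum N))) : Prop :=
  ∀ A : Alg (L.sum N), A ∈ M → ∀ θ : A.carrier → A.carrier → Prop,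
    IsRelCong M A θ ↔ IsRelCong K (algReduct A) θ

/-- Reinterpretation of an `L₁`-algebra as an `L₂`-algebra along a map sending `L₂`-symbols to
`L₁`-terms (both languages are assumed to be purely functional). -/
def reinterpret {L₁ L₂ : FirstOrder.Language.{u, u}} (ρ : ∀ n, L₂.Functions n → L₁.Term (Fin n))
    (A : Alg L₁) : Alg L₂ where
  carrier := A.carrier
  str :=
    { funMap := fun {k} s x => (ρ k s).realize x
      RelMap := fun {k} _ _ => False }

/-- Two expansions of the same base language `L` are faithfully term equivalent relative to
`L`. -/
def FaithfullyTermEquivRel (L : FirstOrder.Language.{u, u}) {N₁ N₂ : FirstOrder.Language.{u, u}}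
    (M₁ : Set (Alg (L.sum N₁))) (M₂ : Set (Alg (L.sum N₂))) : Prop :=
  ∃ (τ : ∀ n, (L.sum N₁).Functions n → (L.sum N₂).Term (Fin n))
    (ρ : ∀ n, (L.sum N₂).Functions n → (L.sum N₁).Term (Fin n)),
    (∀ (n : ℕ) (s : L.Functions n),
      τ n (Sum.inl s) = Term.func (Sum.inl s : (L.sum N₂).Functions n) Term.var) ∧
    (∀ (n : ℕ) (s : L.Functions n),
      ρ n (Sum.inl s) = Term.func (Sum.inl s : (L.sum N₁).Functions n) Term.var) ∧
    (∀ A : Alg (L.sum N₁), A ∈ M₁ → reinterpret ρ A ∈ M₂) ∧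
    (∀ B : Alg (L.sum N₂), B ∈ M₂ → reinterpret τ B ∈ M₁) ∧
    (∀ A : Alg (L.sum N₁), A ∈ M₁ → reinterpret τ (reinterpret ρ A) = A) ∧
    (∀ B : Alg (L.sum N₂), B ∈ M₂ → reinterpret ρ (reinterpret τ B) = B)

/-!
The class of algebras in which `φ` is functional is axiomatized by the universal closure of
`φ(x, y) ∧ φ(x, z) → y = z`, so it is closed under ultraproducts by the theorem of Łoś. When `φ` is
preserved by homomorphisms, two outputs of `φ` at the same input stay such under every
homomorphism, so they coincide as soon as homomorphisms into algebras where `φ` is functional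
separate points. This settles subalgebras (by the embedding) and direct products (by the
projections). Existential positive formulas are preserved by all homomorphisms.
-/

section HomPreservation

variable {α : Type v} {M N : Type*} [L.Structure M] [L.Structure N]

theorem IsPosQF.realize_hom {k : ℕ} {φ : L.BoundedFormula α k} (hφ : IsPosQF φ) (h : M →[L] N)
    (x : α → M) (y : Fin k → M) (hr : φ.Realize x y) : φ.Realize (h ∘ x) (h ∘ y) := by
  induction hφ with
  | falsum => exact hr
  | top => exact BoundedFormula.realize_top.2 trivial
  | equal t₁ t₂ =>
    have ht : t₁.realize (Sum.elim x y) = t₂.realize (Sum.elim x y) := hr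
    change t₁.realize (Sum.elim (h ∘ x) (h ∘ y)) = t₂.realize (Sum.elim (h ∘ x) (h ∘ y))
    rw [← Sum.comp_elim, HomClass.realize_term, HomClass.realize_term, ht]
  | inf _ _ ih₁ ih₂ =>
    rw [BoundedFormula.realize_inf] at hr ⊢
    exact hr.imp ih₁ ih₂
  | sup _ _ ih₁ ih₂ =>
    rw [BoundedFormula.realize_sup] at hr ⊢
    exact hr.imp ih₁ ih₂

theorem IsExistPos.realize_hom {k : ℕ} {φ : L.BoundedFormula α k} (hφ : IsExistPos φ)
    (h : M →[L] N) (x : α → M) (y : Fin k → M) (hr : φ.Realize x y) :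
    φ.Realize (h ∘ x) (h ∘ y) := by
  induction hφ with
  | of_posQF hq => exact hq.realize_hom h x y hr
  | ex _ ih =>
    rw [BoundedFormula.realize_ex] at hr ⊢
    obtain ⟨a, ha⟩ := hr
    refine ⟨h a, ?_⟩
    rw [← Fin.comp_snoc]
    exact ih _ ha

theorem IsExistPos.preservedByHomsOn {φ : L.Formula α} (hφ : IsExistPos φ) (K : Set (Alg L)) :
    PreservedByHomsOn K φ := by
  intro A B _ _ h x hx
  have hhx := hφ.realize_hom h x default hx
  rwa [Subsingleton.elim (h ∘ default) default] at hhx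

end HomPreservation

theorem PreservedByHomsOn.realize_snoc {K : Set (Alg L)} {n : ℕ} {φ : L.Formula (Fin (n + 1))}
    (hφ : PreservedByHomsOn K φ) {A B : Alg L} (hA : A ∈ K) (hB : B ∈ K)
    (h : A.carrier →[L] B.carrier) {x : Fin n → A.carrier} {b : A.carrier}
    (hb : φ.Realize (Fin.snoc x b : Fin (n + 1) → A.carrier)) :
    φ.Realize (Fin.snoc (h ∘ x) (h b) : Fin (n + 1) → B.carrier) := by
  rw [← Fin.comp_snoc]
  exact hφ A B hA hB h _ hb

theorem ClosedUnderSub.closedUnderIso {K : Set (Alg L)} (hK : ClosedUnderSub K) :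
    ClosedUnderIso K :=
  fun A B hA ⟨e⟩ => hK B A hA ⟨e.symm.toEmbedding⟩

theorem isQuasivariety_sInter {S : Set (Set (Alg L))} (hS : ∀ M ∈ S, IsQuasivariety M) :
    IsQuasivariety (⋂₀ S) := by
  have hsub : ClosedUnderSub (⋂₀ S) :=
    fun A B hB e M hM => (hS M hM).2.1 A B (hB M hM) e
  refine ⟨hsub.closedUnderIso, hsub, ?_, ?_⟩
  · exact fun ι A hA M hM => (hS M hM).2.2.1 ι A fun i => hA i M hM
  · exact fun ι F A hA M hM => (hS M hM).2.2.2 ι F A fun i => hA i M hM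

theorem isQuasivariety_QGen (K : Set (Alg L)) : IsQuasivariety (QGen K) :=
  isQuasivariety_sInter fun _ hM => hM.1

theorem subset_QGen (K : Set (Alg L)) : K ⊆ QGen K :=
  Set.subset_sInter fun _ hM => hM.2

theorem QGen_subset {K M : Set (Alg L)} (hM : IsQuasivariety M) (hKM : K ⊆ M) : QGen K ⊆ M :=
  Set.sInter_subset_of_mem ⟨hM, hKM⟩

/-- The projection of a direct product of algebras onto a factor, as a homomorphism. -/
def Alg.piProj {ι : Type u} (A : ι → Alg L) (i : ι) :
    (Alg.pi A).carrier →[L] (A i).carrier where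
  toFun x := x i
  map_fun' _ _ := rfl
  map_rel' _ _ h := h i

theorem realize_uprod_of_forall {α : Type v} [Nonempty α] {ψ : L.Formula α} {ι : Type u}
    (F : Ultrafilter ι) {A : ι → Alg L} (hψ : ∀ i (x : α → (A i).carrier), ψ.Realize x)
    (x : α → (Alg.uprod F A).carrier) : ψ.Realize x := by
  obtain ⟨y, rfl⟩ := Quotient.mk_surjective.comp_left x
  have : ∀ i, Nonempty (A i).carrier := fun i => ⟨y (Classical.arbitrary α) i⟩
  exact (Ultraproduct.realize_formula_cast ψ y).2 (.of_forall fun i => hψ i fun a => y a i)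

section Functional

variable {n : ℕ} {φ : L.Formula (Fin (n + 1))}

/-- The class of all algebras in which `φ(x₁, …, xₙ, y)` has at most one output at each input,
that is, the largest class in which `φ` is functional. -/
def functionalClass (φ : L.Formula (Fin (n + 1))) : Set (Alg L) :=
  { A | ∀ (x : Fin n → A.carrier) (b₁ b₂ : A.carrier),
    φ.Realize (Fin.snoc x b₁ : Fin (n + 1) → A.carrier) →
    φ.Realize (Fin.snoc x b₂ : Fin (n + 1) → A.carrier) → b₁ = b₂ }

/-- The formula `φ(x, y) ∧ φ(x, z) → y = z`, whose universal closure axiomatizes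
`functionalClass φ`; the outputs `y` and `z` are the variables indexed by `Bool`. -/
def uniqueOutputFormula (φ : L.Formula (Fin (n + 1))) : L.Formula (Fin n ⊕ Bool) :=
  (φ.relabel (Fin.snoc Sum.inl (Sum.inr false) : Fin (n + 1) → Fin n ⊕ Bool) ⊓
    φ.relabel (Fin.snoc Sum.inl (Sum.inr true) : Fin (n + 1) → Fin n ⊕ Bool)).imp
    (Term.equal (Term.var (Sum.inr false)) (Term.var (Sum.inr true)))

theorem realize_uniqueOutputFormula {M : Type*} [L.Structure M] (v : Fin n ⊕ Bool → M) :
    (uniqueOutputFormula φ).Realize v ↔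
      (φ.Realize (Fin.snoc (v ∘ Sum.inl) (v (Sum.inr false)) : Fin (n + 1) → M) →
        φ.Realize (Fin.snoc (v ∘ Sum.inl) (v (Sum.inr true)) : Fin (n + 1) → M) →
          v (Sum.inr false) = v (Sum.inr true)) := by
  simp only [uniqueOutputFormula, Formula.realize_imp, Formula.realize_inf,
    Formula.realize_relabel, Formula.realize_equal, Term.realize_var, Fin.comp_snoc, and_imp]

theorem mem_functionalClass_iff_forall_realize {A : Alg L} :
    A ∈ functionalClass φ ↔
      ∀ v : Fin n ⊕ Bool → A.carrier, (uniqueOutputFormula φ).Realize v := by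
  simp only [realize_uniqueOutputFormula]
  refine ⟨fun hA v => hA _ _ _, fun hA x b₁ b₂ => ?_⟩
  exact hA (Sum.elim x fun c => cond c b₂ b₁)

theorem closedUnderUprod_functionalClass (φ : L.Formula (Fin (n + 1))) :
    ClosedUnderUprod (functionalClass φ) := by
  intro ι F A hA
  simp only [mem_functionalClass_iff_forall_realize] at hA ⊢
  exact realize_uprod_of_forall F hA

theorem mem_functionalClass_of_separating {M : Set (Alg L)} (hφ : PreservedByHomsOn M φ)
    {A : Alg L} (hA : A ∈ M)
    (hsep : ∀ a b : A.carrier, a ≠ b →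
      ∃ B ∈ M ∩ functionalClass φ, ∃ h : A.carrier →[L] B.carrier, h a ≠ h b) :
    A ∈ functionalClass φ := by
  intro x b₁ b₂ h₁ h₂
  by_contra hne
  obtain ⟨B, ⟨hBM, hBφ⟩, h, hh⟩ := hsep b₁ b₂ hne
  exact hh (hBφ _ _ _ (hφ.realize_snoc hA hBM h h₁) (hφ.realize_snoc hA hBM h h₂))

theorem IsQuasivariety.inter_functionalClass {M : Set (Alg L)} (hM : IsQuasivariety M)
    (hφ : PreservedByHomsOn M φ) : IsQuasivariety (M ∩ functionalClass φ) := by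
  obtain ⟨-, hMsub, hMprod, hMuprod⟩ := hM
  have hsub : ClosedUnderSub (M ∩ functionalClass φ) := by
    rintro A B hB ⟨e⟩
    have hA : A ∈ M := hMsub A B hB.1 ⟨e⟩
    exact ⟨hA, mem_functionalClass_of_separating hφ hA fun a b hab =>
      ⟨B, hB, e.toHom, e.injective.ne hab⟩⟩
  have hprod : ClosedUnderProd (M ∩ functionalClass φ) := by
    intro ι A hA
    have hpi : Alg.pi A ∈ M := hMprod ι A fun i => (hA i).1
    refine ⟨hpi, mem_functionalClass_of_separating hφ hpi fun a b hab => ?_⟩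
    obtain ⟨i, hi⟩ := Function.ne_iff.1 hab
    exact ⟨A i, hA i, Alg.piProj A i, hi⟩
  have huprod : ClosedUnderUprod (M ∩ functionalClass φ) := fun ι F A hA =>
    ⟨hMuprod ι F A fun i => (hA i).1,
      closedUnderUprod_functionalClass φ ι F A fun i => (hA i).2⟩
  exact ⟨hsub.closedUnderIso, hsub, hprod, huprod⟩

theorem FunctionalIn.to_QGen {K : Set (Alg L)} (hfun : FunctionalIn K φ)
    (hφ : PreservedByHomsOn (QGen K) φ) : FunctionalIn (QGen K) φ :=
  fun _ hA => (QGen_subset ((isQuasivariety_QGen K).inter_functionalClass hφ)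
    (Set.subset_inter (subset_QGen K) hfun) hA).2

/-- The partial function on `K` sending an input to an output of `φ(x₁, …, xₙ, y)`, if there is
one. Several outputs are resolved by choice, so `φ` defines it when `φ` is functional in `K`. -/
noncomputable def outputFun (K : Set (Alg L)) (φ : L.Formula (Fin (n + 1))) :
    PartialFunOn K n :=
  fun A _ x => ⟨∃ b, φ.Realize (Fin.snoc x b : Fin (n + 1) → A.carrier), Exists.choose⟩

theorem FunctionalIn.definedBy_outputFun {K : Set (Alg L)} (hfun : FunctionalIn K φ) :
    DefinedBy (outputFun K φ) φ := by
  intro A hA x b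
  constructor
  · rintro ⟨hex, rfl⟩
    exact hex.choose_spec
  · intro hb
    have hex : ∃ c, φ.Realize (Fin.snoc x c : Fin (n + 1) → A.carrier) := ⟨b, hb⟩
    exact ⟨hex, hfun A hA x _ _ hex.choose_spec hb⟩

theorem DefinedBy.isOperationOn {K : Set (Alg L)} {f : PartialFunOn K n} (hf : DefinedBy f φ)
    (hφ : PreservedByHomsOn K φ) : IsOperationOn f :=
  fun A B hA hB h x b hb =>
    (hf B hB _ _).2 (hφ.realize_snoc hA hB h ((hf A hA x b).1 hb))

theorem statement_2_general {K : Set (Alg L)} (hfun : FunctionalIn K φ)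
    (hφ : PreservedByHomsOn (QGen K) φ) :
    FunctionalIn (QGen K) φ ∧
      ∃ f : PartialFunOn (QGen K) n, DefinedBy f φ ∧ IsOperationOn f := by
  have hQ : FunctionalIn (QGen K) φ := hfun.to_QGen hφ
  have hdef : DefinedBy (outputFun (QGen K) φ) φ := hQ.definedBy_outputFun
  exact ⟨hQ, outputFun (QGen K) φ, hdef, hdef.isOperationOn hφ⟩

end Functional

/-- Let `K` be a class of algebras and `φ(x₁, …, xₙ, y)` an existential
positive formula that is functional in `K`. Then `φ` is functional in the quasivariety `Q(K)`
generated by `K`, and hence `φ` defines an implicit operation of `Q(K)`. -/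
theorem statement_2 {L : FirstOrder.Language.{u, u}} [L.IsAlgebraic]
    (K : Set (Alg L)) {n : ℕ} (hn : 0 < n) (φ : L.Formula (Fin (n + 1)))
    (hep : IsExistPos φ) (hfun : FunctionalIn K φ) :
    FunctionalIn (QGen K) φ ∧
      ∃ f : PartialFunOn (QGen K) n, DefinedBy f φ ∧ IsOperationOn f :=
  statement_2_general hfun (hep.preservedByHomsOn _)

end Impl
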